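/- Pairwise separation across distinct strongly connected components: for every directed graph G = (V, E_d) and nodes v, w ∈ V with v ≠ w and scc_G(v) ≠ scc_G(w), either ({v}, {w}, pa_G(scc_G(w))) ∈ I_E^G or ({w}, {v}, pa_G(scc_G(v))) ∈ I_E^G. -/

import Mathlib

namespace ESepPaper

/-- A directed mixed graph: directed edges and bidirected edges over a node type `V`.
A directed graph (DG) is a DMG with `Ebi = ∅`. -/
structure DMG (V : Type) where
  Ed : Set (V × V)
  Ebi : Set (Sym2 V)

variable {V : Type}

/-- `G.ancestor u v` : there is a directed path `u → … → v` (possibly trivial). -/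
def DMG.ancestor (G : DMG V) : V → V → Prop :=
  Relation.ReflTransGen (fun u v => (u, v) ∈ G.Ed)

/-- Ancestors of a set `C`. -/
def DMG.anc (G : DMG V) (C : Set V) : Set V := {u | ∃ v ∈ C, G.ancestor u v}

/-- Strongly connected component of `v`. -/
def DMG.scc (G : DMG V) (v : V) : Set V := {w | G.ancestor w v ∧ G.ancestor v w}

/-- Parents of a set of nodes. -/
def DMG.pa (G : DMG V) (S : Set V) : Set V := {w | ∃ v ∈ S, (w, v) ∈ G.Ed}

/-- Kind of a traversed edge on a walk: forward directed, backward directed, or bidirected. -/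
inductive LinkType | fwd | bwd | bi
deriving DecidableEq

/-- Validity of a link of kind `t` between consecutive walk nodes `u` and `v`. -/
def DMG.linkOK (G : DMG V) (u v : V) : LinkType → Prop
  | .fwd => (u, v) ∈ G.Ed
  | .bwd => (v, u) ∈ G.Ed
  | .bi => s(u, v) ∈ G.Ebi

/-- Arrowhead at the second (right) endpoint of the link. -/
def LinkType.headR : LinkType → Prop
  | .fwd => True
  | .bwd => False
  | .bi => True

/-- Arrowhead at the first (left) endpoint of the link. -/
def LinkType.headL : LinkType → Prop
  | .fwd => False
  | .bwd => True
  | .bi => True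

/-- Tail at the second (right) endpoint. -/
def LinkType.tailR (t : LinkType) : Prop := t = .bwd

/-- Tail at the first (left) endpoint. -/
def LinkType.tailL (t : LinkType) : Prop := t = .fwd

/-- Walks in a DMG. -/
inductive DMG.Walk (G : DMG V) : V → V → Type
  | nil (v : V) : DMG.Walk G v v
  | cons {u v w : V} (t : LinkType) (h : G.linkOK u v t) (p : DMG.Walk G v w) : DMG.Walk G u w

/-- An interior node on a walk, whose incoming link is `t1` and outgoing link is `t2`,
is a collider iff both links have an arrowhead at it. -/
def colliderAt (t1 t2 : LinkType) : Prop := t1.headR ∧ t2.headL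

/-- An interior non-collider `v` between neighbours `u` (incoming link `t1`) and `w`
(outgoing link `t2`) is unblockable: on every side where the link has a tail at `v`, the
corresponding neighbour lies in `scc_G(v)` (left-chain/right-chain/fork cases). -/
def unblockableAt (G : DMG V) (u v w : V) (t1 t2 : LinkType) : Prop :=
  (t1.tailR → u ∈ G.scc v) ∧ (t2.tailL → w ∈ G.scc v)

namespace DMG.Walk

variable {G : DMG V}

/-- First node of a walk. -/
def first {a b : V} (_ : G.Walk a b) : V := a

def length : {a b : V} → G.Walk a b → ℕ
  | _, _, .nil _ => 0
  | _, _, .cons _ _ p => p.length + 1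

def support : {a b : V} → G.Walk a b → List V
  | a, _, .nil _ => [a]
  | a, _, .cons _ _ p => a :: p.support

/-- Auxiliary: σ-openness of the remainder of a walk, where `u` is the previous node and
`t1` the link from `u` into the current first node. -/
def sigmaOpenAux (C : Set V) : (u : V) → LinkType → {b c : V} → G.Walk b c → Prop
  | _, _, _, _, .nil _ => True
  | u, t1, v, _, .cons t2 _ q =>
      ((colliderAt t1 t2 → v ∈ G.anc C) ∧
       (¬ colliderAt t1 t2 → ¬ unblockableAt G u v q.first t1 t2 → v ∉ C)) ∧
      sigmaOpenAux C v t2 q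

/-- The walk is σ-open given `C`: every collider on it is an ancestor of a node of `C`, and
no blockable non-collider on it lies in `C`. -/
def sigmaOpen (C : Set V) : {a b : V} → G.Walk a b → Prop
  | _, _, .nil _ => True
  | a, _, .cons t _ q => sigmaOpenAux C a t q

/-- All links are forward directed. -/
def IsDirected : {a b : V} → G.Walk a b → Prop
  | _, _, .nil _ => True
  | _, _, .cons t _ p => t = .fwd ∧ p.IsDirected

/-- Interior nodes of the walk (all nodes except the two endpoints). -/
def interior {a b : V} (p : G.Walk a b) : List V := p.support.tail.dropLast

/-- Arrowhead at the first endpoint. -/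
def headAtStart : {a b : V} → G.Walk a b → Prop
  | _, _, .nil _ => False
  | _, _, .cons t _ _ => t.headL

def headAtEndAux : LinkType → {a b : V} → G.Walk a b → Prop
  | t, _, _, .nil _ => t.headR
  | _, _, _, .cons t _ q => headAtEndAux t q

/-- Arrowhead at the last endpoint. -/
def headAtEnd : {a b : V} → G.Walk a b → Prop
  | _, _, .nil _ => False
  | _, _, .cons t _ q => headAtEndAux t q

def noCollidersAux : LinkType → {a b : V} → G.Walk a b → Prop
  | _, _, _, .nil _ => True
  | t1, _, _, .cons t2 _ q => ¬ colliderAt t1 t2 ∧ noCollidersAux t2 q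

/-- There is no collider on the walk. -/
def NoColliders : {a b : V} → G.Walk a b → Prop
  | _, _, .nil _ => True
  | _, _, .cons t _ q => noCollidersAux t q

def collidersInAux (S : Set V) : LinkType → {a b : V} → G.Walk a b → Prop
  | _, _, _, .nil _ => True
  | t1, v, _, .cons t2 _ q => (colliderAt t1 t2 → v ∈ S) ∧ collidersInAux S t2 q

/-- Every collider on the walk lies in `S`. -/
def CollidersIn (S : Set V) : {a b : V} → G.Walk a b → Prop
  | _, _, .nil _ => True
  | _, _, .cons t _ q => collidersInAux S t q

def noncollUnblAux : (u : V) → LinkType → {b c : V} → G.Walk b c → Prop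
  | _, _, _, _, .nil _ => True
  | u, t1, v, _, .cons t2 _ q =>
      (¬ colliderAt t1 t2 → unblockableAt G u v q.first t1 t2) ∧ noncollUnblAux v t2 q

/-- Every interior non-collider on the walk is unblockable. -/
def NoncollidersUnblockable : {a b : V} → G.Walk a b → Prop
  | _, _, .nil _ => True
  | a, _, .cons t _ q => noncollUnblAux a t q

/-- The set of edges occurring on a walk (directed edges as ordered pairs in `E_d`,
bidirected edges as unordered pairs). -/
def edges : {a b : V} → G.Walk a b → Set ((V × V) ⊕ Sym2 V)
  | _, _, .nil _ => ∅
  | a, _, .cons t _ p =>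
      insert (match t with
        | .fwd => Sum.inl (a, p.first)
        | .bwd => Sum.inl (p.first, a)
        | .bi => Sum.inr s(a, p.first)) p.edges

/-- Concatenation of walks. -/
def append : {a b c : V} → G.Walk a b → G.Walk b c → G.Walk a c
  | _, _, _, .nil _, q => q
  | _, _, _, .cons t h p, q => .cons t h (p.append q)

/-- A walk `v_0, …, v_{n+1}` is a path if no node besides the final endpoint occurs more
than once, i.e. `v_0, …, v_n` are pairwise distinct. -/
def IsPath {a b : V} (p : G.Walk a b) : Prop := p.support.dropLast.Nodup

end DMG.Walk

/-- `A` is σ-separated from `B` given `C` in `G`: every walk from a node of `A` to a node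
of `B` is σ-blocked given `C`. -/
def DMG.sigmaSep (G : DMG V) (A B C : Set V) : Prop :=
  ∀ a ∈ A, ∀ b ∈ B, ∀ p : G.Walk a b, ¬ p.sigmaOpen C

/-- The lifted dependency graph of `G`, on two copies of `V`
(`Sum.inl` is the past copy `V_0`, `Sum.inr` the future copy `V_1`). -/
def DMG.lift (G : DMG V) : DMG (V ⊕ V) where
  Ed := {e | ∃ u v, (u, v) ∈ G.Ed ∧
        (e = (Sum.inl u, Sum.inl v) ∨ e = (Sum.inl u, Sum.inr v) ∨
         e = (Sum.inr u, Sum.inr v))}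
  Ebi := {e | ∃ u v, s(u, v) ∈ G.Ebi ∧
        (e = s(Sum.inl u, Sum.inl v) ∨ e = s(Sum.inl u, Sum.inr v) ∨
         e = s(Sum.inr u, Sum.inl v) ∨ e = s(Sum.inr u, Sum.inr v))}

/-- `B` is E-separated from `A` given `C` in `G`:
`A_0` is σ-separated from `B_1` given `C_0 ∪ (C_1 \ B_1)` in the lifted dependency graph. -/
def DMG.ESep (G : DMG V) (A B C : Set V) : Prop :=
  G.lift.sigmaSep (Sum.inl '' A) (Sum.inr '' B)
    ((Sum.inl '' C) ∪ ((Sum.inr '' C) \ (Sum.inr '' B)))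

/-- The independence model `I_E^G` of E-separation triples. -/
def DMG.IE (G : DMG V) : Set (Set V × Set V × Set V) :=
  {t | G.ESep t.1 t.2.1 t.2.2}


/-- The latent projection of `G` onto the observed nodes `O`: a directed edge when there is
a non-trivial directed walk whose interior nodes are all latent, and a bidirected edge when
there is a non-trivial collider-free walk with arrowheads at both endpoints whose interior
nodes are all latent. -/
def DMG.latentProj (G : DMG V) (O : Set V) : DMG O where
  Ed := {e | ∃ p : G.Walk e.1.val e.2.val,
          p.IsDirected ∧ 0 < p.length ∧ ∀ x ∈ p.interior, x ∉ O}
  Ebi := {e | ∃ u v : O, e = s(u, v) ∧ ∃ p : G.Walk u.val v.val,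
          p.headAtStart ∧ p.headAtEnd ∧ p.NoColliders ∧ 0 < p.length ∧
          ∀ x ∈ p.interior, x ∉ O}

/-- The last edge of the walk `p` before entering `scc_G(w)` has an arrowhead at its
endpoint in `scc_G(w)` (vacuous if the walk never leaves `scc_G(w)`). -/
def DMG.lastEdgeInto (G : DMG V) {a b : V} (w : V) (p : G.Walk a b) : Prop :=
  (∀ x ∈ p.support, x ∈ G.scc w) ∨
  ∃ (x y : V) (t : LinkType) (h : G.linkOK x y t) (p₁ : G.Walk a x) (p₂ : G.Walk y b),
    p = p₁.append (.cons t h p₂) ∧ x ∉ G.scc w ∧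
    (∀ z ∈ p₂.support, z ∈ G.scc w) ∧ t.headR

/-- An (asymmetric) inducing path from `v` to `w`: a non-trivial path such that every
collider on it is an ancestor of `v` or `w`, every interior non-collider is unblockable,
and the last edge before entering `scc_G(w)` points into `scc_G(w)`. -/
def DMG.IsInducingPath (G : DMG V) {v w : V} (p : G.Walk v w) : Prop :=
  0 < p.length ∧ p.IsPath ∧
  p.CollidersIn (G.anc {v, w}) ∧ p.NoncollidersUnblockable ∧ G.lastEdgeInto w p

theorem lift_anc_inr (G : DMG V) {d : V} {e : V ⊕ V} (h : G.lift.ancestor (Sum.inr d) e) :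
    ∃ e', e = Sum.inr e' ∧ G.ancestor d e' := by
  unfold DMG.ancestor at h
  induction h with
  | refl => exact ⟨d, rfl, Relation.ReflTransGen.refl⟩
  | tail _ hbc ih =>
    obtain ⟨b', rfl, hb'⟩ := ih
    obtain ⟨x, y, hxy, h | h | h⟩ := hbc
    · simp at h
    · simp at h
    · simp only [Prod.mk.injEq, Sum.inr.injEq] at h
      obtain ⟨rfl, rfl⟩ := h
      exact ⟨y, rfl, Relation.ReflTransGen.tail hb' hxy⟩

theorem edge_to_inr (G : DMG V) {b : V ⊕ V} {c : V} (h : (b, Sum.inr c) ∈ G.lift.Ed) :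
    ∃ b', (b', c) ∈ G.Ed ∧ (b = Sum.inl b' ∨ b = Sum.inr b') := by
  obtain ⟨x, y, hxy, h | h | h⟩ := h <;> simp at h
  · obtain ⟨rfl, rfl⟩ := h
    exact ⟨x, hxy, Or.inl rfl⟩
  · obtain ⟨rfl, rfl⟩ := h
    exact ⟨x, hxy, Or.inr rfl⟩

theorem edge_from_inr (G : DMG V) {b : V} {c : V ⊕ V} (h : (Sum.inr b, c) ∈ G.lift.Ed) :
    ∃ c', (b, c') ∈ G.Ed ∧ c = Sum.inr c' := by
  obtain ⟨x, y, hxy, h | h | h⟩ := h <;> simp at h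
  obtain ⟨rfl, rfl⟩ := h
  exact ⟨y, hxy, rfl⟩

theorem pa_scc_anc (G : DMG V) {p v : V} (h : p ∈ G.pa (G.scc v)) : G.ancestor p v := by
  obtain ⟨y, hy, he⟩ := h
  exact Relation.ReflTransGen.head he hy.1

/-- Invariant of an open walk starting in the past copy. -/
def SepInv (G : DMG V) (v : V) (t : LinkType) (b : V ⊕ V) : Prop :=
  ∀ d, b = Sum.inr d → (G.ancestor d v → ¬ G.ancestor v d) ∧ (¬ G.ancestor d v → t = .fwd)

theorem sep_aux (G : DMG V) (hG : G.Ebi = ∅) (v : V) {b c : V ⊕ V} (p : G.lift.Walk b c) :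
    ∀ (u : V ⊕ V) (t : LinkType), SepInv G v t b → c = Sum.inr v →
      ¬ DMG.Walk.sigmaOpenAux ((Sum.inl '' (G.pa (G.scc v))) ∪
        ((Sum.inr '' (G.pa (G.scc v))) \ (Sum.inr '' ({v} : Set V)))) u t p := by
  induction p with
  | nil a =>
    intro u t hI hc _
    exact (hI v hc).1 Relation.ReflTransGen.refl Relation.ReflTransGen.refl
  | @cons b c e t2 h q ih =>
    intro u t hI hc ho
    obtain ⟨⟨ho1, ho2⟩, ho3⟩ := ho
    refine ih b t2 ?_ hc ho3
    cases t2 with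
    | bi =>
      obtain ⟨x, y, hxy, _⟩ := h
      rw [hG] at hxy
      exact absurd hxy (Set.notMem_empty _)
    | fwd =>
      rintro d rfl
      refine ⟨fun h1 h2 => ?_, fun _ => rfl⟩
      obtain ⟨b', hb', hb⟩ := edge_to_inr G h
      have hpa : b' ∈ G.pa (G.scc v) := ⟨d, ⟨h1, h2⟩, hb'⟩
      have hb'v : G.ancestor b' v := pa_scc_anc G hpa
      refine ho2 (fun hcol => hcol.2) ?_ ?_
      · intro hun
        obtain ⟨hs, _⟩ := hun.2 rfl
        obtain ⟨b'', rfl, hdb⟩ := lift_anc_inr G hs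
        rcases hb with hb | hb
        · simp at hb
        · simp only [Sum.inr.injEq] at hb
          subst hb
          exact (hI _ rfl).1 hb'v (Relation.ReflTransGen.trans h2 hdb)
      · rcases hb with rfl | rfl
        · exact Or.inl ⟨b', hpa, rfl⟩
        · refine Or.inr ⟨⟨b', hpa, rfl⟩, ?_⟩
          rintro ⟨z, hz, hzb⟩
          simp only [Sum.inr.injEq, Set.mem_singleton_iff] at hz hzb
          subst hzb
          subst hz
          exact (hI _ rfl).1 Relation.ReflTransGen.refl Relation.ReflTransGen.refl
    | bwd =>
      rintro d rfl
      obtain ⟨b', hb', rfl⟩ := edge_from_inr G h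
      by_cases hbv : G.ancestor b' v
      · have hdv : G.ancestor d v := Relation.ReflTransGen.head hb' hbv
        exact ⟨fun _ h2 => (hI _ rfl).1 hbv (Relation.ReflTransGen.tail h2 hb'),
          fun hn => absurd hdv hn⟩
      · exfalso
        have ht := (hI _ rfl).2 hbv
        subst ht
        obtain ⟨z, hz, hbz⟩ := ho1 ⟨trivial, trivial⟩
        obtain ⟨z', rfl, hbz'⟩ := lift_anc_inr G hbz
        rcases hz with ⟨y, _, hy⟩ | ⟨⟨y, hy, hyz⟩, _⟩
        · simp at hy
        · simp only [Sum.inr.injEq] at hyz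
          subst hyz
          exact hbv (Relation.ReflTransGen.trans hbz' (pa_scc_anc G hy))

theorem sep_main (G : DMG V) (hG : G.Ebi = ∅) (v w : V) (hn : ¬ G.ancestor w v) :
    (({w} : Set V), ({v} : Set V), G.pa (G.scc v)) ∈ G.IE := by
  rintro _ ⟨w', hw, rfl⟩ _ ⟨v', hv, rfl⟩ p ho
  simp only [Set.mem_singleton_iff] at hw hv
  subst hw
  subst hv
  cases p with
  | cons t h q =>
    refine sep_aux G hG v' q _ t ?_ rfl ho
    rintro d rfl
    cases t with
    | bi =>
      obtain ⟨x, y, hxy, _⟩ := h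
      rw [hG] at hxy
      exact absurd hxy (Set.notMem_empty _)
    | fwd =>
      refine ⟨fun h1 _ => ?_, fun _ => rfl⟩
      obtain ⟨b', hb', hb | hb⟩ := edge_to_inr G h
      · simp only [Sum.inl.injEq] at hb
        subst hb
        exact hn (Relation.ReflTransGen.head hb' h1)
      · simp at hb
    | bwd =>
      obtain ⟨b', _, hb⟩ := edge_from_inr G h
      simp at hb

/-- Pairwise separation across distinct strongly connected components. -/
theorem pairwise_separation {V : Type} [Fintype V] (G : DMG V) (hG : G.Ebi = ∅)
    (v w : V) (hvw : v ≠ w) (hscc : G.scc v ≠ G.scc w) :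
    (({v} : Set V), ({w} : Set V), G.pa (G.scc w)) ∈ G.IE ∨
    (({w} : Set V), ({v} : Set V), G.pa (G.scc v)) ∈ G.IE := by
  by_cases h1 : G.ancestor w v
  · by_cases h2 : G.ancestor v w
    · exfalso
      apply hscc
      ext x
      exact ⟨fun hx => ⟨Relation.ReflTransGen.trans hx.1 h2, Relation.ReflTransGen.trans h1 hx.2⟩,
        fun hx => ⟨Relation.ReflTransGen.trans hx.1 h1, Relation.ReflTransGen.trans h2 hx.2⟩⟩
    · exact Or.inl (sep_main G hG w v h2)
  · exact Or.inr (sep_main G hG v w h1)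

end ESepPaper
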